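/- Assume every 𝚺¹₂ subset of ℝ × ℝ has the Baire property. Then for every nonmeager Borel set B ⊆ ℝ and every equivalence relation E on B which is a 𝚺¹₂ subset of ℝ × ℝ and all of whose equivalence classes are meager, there is a perfect set P ⊆ B of pairwise E-inequivalent elements. -/

import Mathlib

/-! The transitivity of `E` plays no role: the argument is Kuratowski–Ulam followed by Mycielski's theorem.

The hypothesis gives `E` the Baire property in the plane, and every vertical section of `E` is
meagre (it is empty over points outside `B`). By Kuratowski–Ulam, `E` is meagre: otherwise `E`
would be comeagre in a nonempty open rectangle `V × W`, so some section of `E` would be comeagre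
in `W` (`isMeagre_of_sections`).

The Borel set `B` is comeagre in some nonempty open set `O`. The pairs in `E`, the diagonal pairs,
and the pairs with first coordinate in `O \ B` together form a meagre subset `M` of the plane.
Mycielski's theorem (`exists_continuousMap_cantor`) gives a continuous map `f` from the Cantor
space to `O` with `(f x, f y) ∉ M` for all `x ≠ y`, and the range of `f` is the perfect set.

Mycielski's theorem is proved by Baire category in the complete metric space `C(ℕ → Bool, ℝ)`.
For a dense open `G` in the plane, the set of `f` such that `(f x, f y) ∈ G` whenever `x n ≠ y n`
is open by compactness. It is dense because any continuous function is uniformly close to one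
depending on finitely many coordinates only, and the finitely many values of the latter can be
perturbed so that every pair of them lies in `G`.
-/


open MeasureTheory Set

/-- A set is 𝚺¹₂ if it is the projection of a coanalytic subset of `X × ℕ^ℕ`. -/
def Sigma12 {X : Type*} [TopologicalSpace X] (A : Set X) : Prop :=
  ∃ C : Set (X × (ℕ → ℕ)), AnalyticSet Cᶜ ∧ A = Prod.fst '' C

/-- A set is 𝚫¹₂ if both it and its complement are 𝚺¹₂. -/
def Delta12 {X : Type*} [TopologicalSpace X] (A : Set X) : Prop :=
  Sigma12 A ∧ Sigma12 Aᶜ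

/-- A set has the Baire property if it differs from an open set by a meager set. -/
def HasBaireProp {Y : Type*} [TopologicalSpace Y] (s : Set Y) : Prop :=
  ∃ U : Set Y, IsOpen U ∧ IsMeagre (symmDiff s U)

/-- `E` is an equivalence relation on the set `B`, viewed as a set of pairs. -/
def IsEquivOn {X : Type*} (B : Set X) (E : Set (X × X)) : Prop :=
  E ⊆ B ×ˢ B ∧ (∀ x ∈ B, (x, x) ∈ E) ∧ (∀ x y, (x, y) ∈ E → (y, x) ∈ E) ∧
    ∀ x y z, (x, y) ∈ E → (y, z) ∈ E → (x, z) ∈ E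

open Filter Topology

/-- Kuratowski–Ulam, one direction: almost every vertical section of a comeagre subset of the plane
is comeagre. -/
theorem residual_sections {R : Set (ℝ × ℝ)} (hR : R ∈ residual (ℝ × ℝ)) :
    ∀ᶠ x in residual ℝ, {y | (x, y) ∈ R} ∈ residual ℝ := by
  obtain ⟨S, hSo, hSd, hSc, hSR⟩ := mem_residual_iff.1 hR
  -- It suffices to treat a single dense open set `G`.
  have key : ∀ G ∈ S, ∀ᶠ x in residual ℝ, {y | (x, y) ∈ G} ∈ residual ℝ := by
    intro G hG
    have hb := TopologicalSpace.isBasis_countableBasis ℝ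
    -- For each basic open `W`, the section of `G` over almost every point meets `W`.
    have h1 : ∀ W ∈ TopologicalSpace.countableBasis ℝ,
        ∀ᶠ x in residual ℝ, ∃ y ∈ W, (x, y) ∈ G := by
      intro W hW
      have hWo := hb.isOpen hW
      have hWne : W.Nonempty := TopologicalSpace.nonempty_of_mem_countableBasis hW
      apply residual_of_dense_open
      · have : {x : ℝ | ∃ y ∈ W, (x, y) ∈ G} = Prod.fst '' (G ∩ univ ×ˢ W) := by
          ext x; simp; constructor <;> rintro ⟨y, h⟩ <;> exact ⟨y, h.2, h.1⟩
        exact this ▸ isOpenMap_fst _ ((hSo G hG).inter (isOpen_univ.prod hWo))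
      · rw [dense_iff_inter_open]
        intro V hV hVne
        obtain ⟨⟨x, y⟩, hxy, hxG⟩ := (hSd G hG).inter_open_nonempty _ (hV.prod hWo)
          (hVne.prod hWne)
        exact ⟨x, hxy.1, y, hxy.2, hxG⟩
    have h2 := (eventually_countable_ball (TopologicalSpace.countable_countableBasis ℝ)).2 h1
    filter_upwards [h2] with x hx
    apply residual_of_dense_open
    · exact (hSo G hG).preimage (by fun_prop : Continuous fun y : ℝ => (x, y))
    · rw [hb.dense_iff]
      intro W hW _
      obtain ⟨y, hy, hG'⟩ := hx W hW
      exact ⟨y, hy, hG'⟩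
  have h3 := (eventually_countable_ball hSc).2 key
  filter_upwards [h3] with x hx
  filter_upwards [(eventually_countable_ball hSc).2 hx] with y hy
  exact hSR fun G hG => hy G hG

/-- Kuratowski–Ulam, converse direction: a plane set with the Baire property all of whose vertical
sections are meagre is itself meagre. -/
theorem isMeagre_of_sections {E : Set (ℝ × ℝ)} (hE : HasBaireProp E)
    (hs : ∀ x, IsMeagre {y | (x, y) ∈ E}) : IsMeagre E := by
  obtain ⟨U, hU, hM⟩ := hE
  have hUe : U = ∅ := by
    by_contra hne
    obtain ⟨⟨a, b⟩, hab⟩ := nonempty_iff_ne_empty.2 hne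
    obtain ⟨V, W, hV, hW, haV, hbW, hVW⟩ := isOpen_prod_iff.1 hU a b hab
    obtain ⟨x, hxV, hx⟩ := (dense_of_mem_residual (residual_sections hM)).inter_open_nonempty
      V hV ⟨a, haV⟩
    refine not_isMeagre_of_isOpen hW ⟨b, hbW⟩ ?_
    have hx' : IsMeagre {y | (x, y) ∈ symmDiff E U} := hx
    refine (hx'.union (hs x)).mono fun y hy => ?_
    by_cases hyE : (x, y) ∈ E
    · exact Or.inr hyE
    · exact Or.inl (Or.inr ⟨hVW ⟨hxV, hy⟩, hyE⟩)
  subst hUe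
  exact hM.mono fun p hp => Or.inl ⟨hp, fun h => h⟩

theorem exists_dist_lt_of_compact {X : Type*} [MetricSpace X] [CompactSpace X] {g : X → ℝ}
    (hg : Continuous g) {ε : ℝ} (hε : 0 < ε) :
    ∃ δ > 0, ∀ x y : X, dist x y < δ → dist (g x) (g y) < ε := by
  obtain ⟨δ, hδ, h⟩ := Metric.uniformContinuous_iff.1
    (CompactSpace.uniformContinuous_of_continuous hg) ε hε
  exact ⟨δ, hδ, fun x y hxy => h hxy⟩

/-- Uniform continuity on the Cantor space, phrased with initial segments. -/
theorem exists_forall_dist_lt (g : C(ℕ → Bool, ℝ)) {ε : ℝ} (hε : 0 < ε) :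
    ∃ m : ℕ, ∀ x y : ℕ → Bool, (∀ i < m, x i = y i) → dist (g x) (g y) < ε := by
  let : MetricSpace (ℕ → Bool) := PiNat.metricSpace
  obtain ⟨δ, hδ, h⟩ := exists_dist_lt_of_compact g.continuous hε
  obtain ⟨m, hm⟩ := exists_pow_lt_of_lt_one hδ (by norm_num : (1 / 2 : ℝ) < 1)
  refine ⟨m, fun x y hxy => h x y (lt_of_le_of_lt ?_ hm)⟩
  exact PiNat.mem_cylinder_iff_dist_le.1 fun i hi => hxy i hi

/-- Generic finite tuples: any tuple of reals can be perturbed so that every pair of distinct entries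
lies in a given comeagre subset of the plane. -/
theorem dense_tuples {ι : Type*} [Finite ι] {R : Set (ℝ × ℝ)} (hR : R ∈ residual (ℝ × ℝ)) :
    Dense {v : ι → ℝ | ∀ s t, s ≠ t → (v s, v t) ∈ R} := by
  classical
  have := Fintype.ofFinite ι
  apply dense_of_mem_residual
  have : ∀ᶠ v : ι → ℝ in residual (ι → ℝ), ∀ s t, s ≠ t → (v s, v t) ∈ R := by
    rw [eventually_countable_forall]; intro s
    rw [eventually_countable_forall]; intro t
    by_cases hst : s = t
    · simp [hst]
    let L : (ι → ℝ) →L[ℝ] ℝ × ℝ :=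
      (ContinuousLinearMap.proj (R := ℝ) (φ := fun _ : ι => ℝ) s).prod
        (ContinuousLinearMap.proj (R := ℝ) (φ := fun _ : ι => ℝ) t)
    have hL : Function.Surjective L := by
      rintro ⟨a, b⟩
      exact ⟨Function.update (fun _ => b) s a, by simp [L, Function.update, Ne.symm hst]⟩
    filter_upwards [(tendsto_residual_of_isOpenMap L.continuous (L.isOpenMap hL)) hR] with v hv _
    exact hv
  exact this

/-- Openness of the generic condition in Mycielski's theorem: the pairs of sequences differing at `n`
form a compact set. -/
theorem isOpen_separating {G : Set (ℝ × ℝ)} (hG : IsOpen G) (n : ℕ) :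
    IsOpen {f : C(ℕ → Bool, ℝ) | ∀ x y, x n ≠ y n → (f x, f y) ∈ G} := by
  let D : Set ((ℕ → Bool) × (ℕ → Bool)) := {p | p.1 n ≠ p.2 n}
  have hD : IsCompact D := by
    have : IsClosed D := (isClosed_discrete {q : Bool × Bool | q.1 ≠ q.2}).preimage
      (f := fun p : (ℕ → Bool) × (ℕ → Bool) => (p.1 n, p.2 n)) (by fun_prop)
    exact this.isCompact
  let Φ : C(ℕ → Bool, ℝ) → C((ℕ → Bool) × (ℕ → Bool), ℝ × ℝ) := fun f =>
    (f.comp ContinuousMap.fst).prodMk (f.comp ContinuousMap.snd)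
  have hΦ : Continuous Φ := by
    refine ContinuousMap.continuous_of_continuous_uncurry _ ?_
    change Continuous fun q : C(ℕ → Bool, ℝ) × ((ℕ → Bool) × (ℕ → Bool)) =>
      (q.1 q.2.1, q.1 q.2.2)
    fun_prop
  convert (ContinuousMap.isOpen_setOfPred_mapsTo hD hG).preimage hΦ using 1
  ext f
  exact ⟨fun h p hp => h p.1 p.2 hp, fun h x y hxy => @h (x, y) hxy⟩

/-- Density of the generic condition in Mycielski's theorem: a continuous function is approximated by
one depending on the first `m` coordinates only, whose values are perturbed by `dense_tuples`. -/
theorem dense_separating {G : Set (ℝ × ℝ)} (hG : G ∈ residual (ℝ × ℝ)) (n : ℕ) :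
    Dense {f : C(ℕ → Bool, ℝ) | ∀ x y, x n ≠ y n → (f x, f y) ∈ G} := by
  rw [Metric.dense_iff]
  intro g ε hε
  obtain ⟨m₀, hm₀⟩ := exists_forall_dist_lt g (half_pos (half_pos hε))
  -- The cut-off `m` exceeds `n` so that sequences differing at `n` have different restrictions.
  let m := max m₀ (n + 1)
  let r : (ℕ → Bool) → (Fin m → Bool) := fun x i => x i
  have hr : Continuous r := by fun_prop
  let e : (Fin m → Bool) → (ℕ → Bool) := fun s i => if h : i < m then s ⟨i, h⟩ else false
  obtain ⟨v, hvG, hv⟩ := Metric.dense_iff.1 (dense_tuples (ι := Fin m → Bool) hG)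
    (fun s => g (e s)) (ε / 4) (by positivity)
  let f : C(ℕ → Bool, ℝ) := ⟨fun x => v (r x), continuous_of_discreteTopology.comp hr⟩
  refine ⟨f, ?_, fun x y hxy => ?_⟩
  · rw [Metric.mem_ball]
    refine lt_of_le_of_lt ((ContinuousMap.dist_le (by positivity : 0 ≤ ε / 2)).2 fun x => ?_)
      (half_lt_self hε)
    have h1 : dist (v (r x)) (g (e (r x))) < ε / 4 :=
      lt_of_le_of_lt (dist_le_pi_dist v (fun s => g (e s)) (r x)) hvG
    have h2 : dist (g (e (r x))) (g x) < ε / 2 / 2 := by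
      refine hm₀ _ _ fun i hi => ?_
      have : i < m := lt_of_lt_of_le hi (le_max_left _ _)
      simp [e, r, this]
    have h3 := dist_triangle (v (r x)) (g (e (r x))) (g x)
    change dist (v (r x)) (g x) ≤ ε / 2
    linarith
  · exact hv _ _ fun h => hxy (congrFun h ⟨n, lt_of_lt_of_le n.lt_succ_self (le_max_right _ _)⟩)

/-- Mycielski's theorem: a meagre subset of the plane is avoided by all pairs of distinct points of
some continuous image of the Cantor space inside any given nonempty open set. -/
theorem exists_continuousMap_cantor {M : Set (ℝ × ℝ)} (hM : IsMeagre M) {O : Set ℝ}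
    (hO : IsOpen O) (hne : O.Nonempty) :
    ∃ f : C(ℕ → Bool, ℝ), (∀ x, f x ∈ O) ∧ ∀ x y, x ≠ y → (f x, f y) ∉ M := by
  obtain ⟨S, hSo, hSd, hSc, hSM⟩ := mem_residual_iff.1 (show Mᶜ ∈ residual _ from hM)
  have hgen : ∀ᶠ f : C(ℕ → Bool, ℝ) in residual _,
      ∀ G ∈ S, ∀ n : ℕ, ∀ x y, x n ≠ y n → (f x, f y) ∈ G := by
    refine (eventually_countable_ball hSc).2 fun G hG => eventually_countable_forall.2 fun n => ?_
    exact residual_of_dense_open (isOpen_separating (hSo G hG) n)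
      (dense_separating (residual_of_dense_open (hSo G hG) (hSd G hG)) n)
  obtain ⟨c, hc⟩ := hne
  obtain ⟨f, hfO, hf⟩ := (dense_of_mem_residual hgen).inter_open_nonempty
    {f : C(ℕ → Bool, ℝ) | MapsTo f univ O}
    (ContinuousMap.isOpen_setOfPred_mapsTo isCompact_univ hO)
    ⟨ContinuousMap.const _ c, fun _ _ => hc⟩
  refine ⟨f, fun x => hfO (mem_univ x), fun x y hxy => ?_⟩
  obtain ⟨n, hn⟩ := Function.ne_iff.1 hxy
  exact hSM fun G hG => hf G hG n x y hn

theorem tendsto_flip (x : ℕ → Bool) :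
    Tendsto (fun n => Function.update x n (!x n)) atTop (𝓝 x) := by
  rw [tendsto_pi_nhds]
  intro i
  refine tendsto_const_nhds.congr' ?_
  filter_upwards [eventually_gt_atTop i] with n hn
  rw [Function.update_of_ne hn.ne]

theorem flip_ne (x : ℕ → Bool) (n : ℕ) : Function.update x n (!x n) ≠ x := by
  intro h
  simpa using congrFun h n

theorem perfect_range_of_injective {f : C(ℕ → Bool, ℝ)} (hf : Function.Injective f) :
    Perfect (range f) := by
  refine ⟨(isCompact_range f.continuous).isClosed, preperfect_iff_nhds.2 ?_⟩
  rintro _ ⟨x, rfl⟩ U hU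
  obtain ⟨n, hn⟩ := (((f.continuous.tendsto x).comp (tendsto_flip x)).eventually hU).exists
  exact ⟨_, ⟨hn, mem_range_self _⟩, fun h => flip_ne x n (hf h)⟩

theorem isMeagre_diagonal : IsMeagre {p : ℝ × ℝ | p.1 = p.2} := by
  refine residual_of_dense_open (isClosed_eq continuous_fst continuous_snd).isOpen_compl ?_
  rw [Metric.dense_iff]
  rintro ⟨a, b⟩ ε hε
  by_cases hab : a = b
  · refine ⟨(a, b + ε / 2), ?_, fun h => ?_⟩
    · simp [Prod.dist_eq, abs_of_pos hε, hε]
    · have h' : a = b + ε / 2 := h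
      linarith
  · exact ⟨(a, b), Metric.mem_ball_self hε, hab⟩

theorem psp_meager_sigma12
    (hbp : ∀ A : Set (ℝ × ℝ), Sigma12 A → HasBaireProp A) :
    ∀ B : Set ℝ, MeasurableSet B → ¬ IsMeagre B →
      ∀ E : Set (ℝ × ℝ), IsEquivOn B E → Sigma12 E →
        (∀ x ∈ B, IsMeagre {y | (x, y) ∈ E}) →
        ∃ P : Set ℝ, P ⊆ B ∧ Perfect P ∧ P.Nonempty ∧
          ∀ x ∈ P, ∀ y ∈ P, x ≠ y → (x, y) ∉ E := by
  intro B hB hBm E ⟨hEB, _⟩ hES hEm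
  have hE : IsMeagre E := by
    refine isMeagre_of_sections (hbp E hES) fun x => ?_
    by_cases hx : x ∈ B
    · exact hEm x hx
    · exact IsMeagre.empty.mono fun y hy => hx (hEB hy).1
  obtain ⟨O, hO, hBO⟩ := hB.residualEq_isOpen
  have hOB : IsMeagre (O \ B) := by
    have : ∀ᶠ x in residual ℝ, x ∈ (O \ B)ᶜ := by
      filter_upwards [hBO.mem_iff] with x hx h
      exact h.2 (hx.2 h.1)
    exact this
  have hOne : O.Nonempty := by
    by_contra h
    rw [not_nonempty_iff_eq_empty] at h
    subst h
    refine hBm ?_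
    have : ∀ᶠ x in residual ℝ, x ∈ Bᶜ := by
      filter_upwards [hBO.mem_iff] with x hx h
      exact hx.1 h
    exact this
  obtain ⟨f, hfO, hf⟩ := exists_continuousMap_cantor
    ((hE.union isMeagre_diagonal).union
      (hOB.preimage_of_isOpenMap (f := (Prod.fst : ℝ × ℝ → ℝ)) continuous_fst isOpenMap_fst))
    hO hOne
  have hinj : Function.Injective f := fun x y hxy => by
    by_contra hne
    exact hf x y hne (Or.inl (Or.inr hxy))
  refine ⟨range f, ?_, perfect_range_of_injective hinj, range_nonempty f, ?_⟩
  · rintro _ ⟨x, rfl⟩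
    by_contra hx
    -- Any second point of the Cantor space shows that `f x` avoids `O \ B`.
    exact hf x _ (flip_ne x 0).symm (Or.inr ⟨hfO x, hx⟩)
  · rintro _ ⟨x, rfl⟩ _ ⟨y, rfl⟩ hxy hmem
    exact hf x y (fun h => hxy (congrArg f h)) (Or.inl (Or.inl hmem))
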